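/- Let u be a smooth function on ℝ³ \ {0} with compact support in ℝ³ \ {0}, and let U(y) = |y| u(y/|y|²) be its Kelvin transform. Then ∫_{ℝ³} |ΔU(y)|² dy = ∫_{ℝ³} |Δu(x)|² dx. -/

import Mathlib

open MeasureTheory

noncomputable section

abbrev E3 := EuclideanSpace ℝ (Fin 3)

/-- The Euclidean Laplacian on `ℝ³`: sum of pure second partial derivatives. -/
def lap (f : E3 → ℝ) (x : E3) : ℝ :=
  ∑ i : Fin 3,
    fderiv ℝ (fun y => fderiv ℝ f y (EuclideanSpace.single i (1:ℝ))) x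
      (EuclideanSpace.single i (1:ℝ))

/-- The Kelvin transform `U(y) = |y| u(y/|y|²)`. -/
def kelvin (u : E3 → ℝ) (y : E3) : ℝ := ‖y‖ * u ((‖y‖ ^ 2)⁻¹ • y)

open scoped ContDiff
open EuclideanGeometry

/-- The `i`-th partial derivative of a function on `ℝ³`. -/
def pd (i : Fin 3) (f : E3 → ℝ) (x : E3) : ℝ :=
  fderiv ℝ f x (EuclideanSpace.single i (1 : ℝ))

/-- The Euler (radial) derivative `x · ∇f`. -/
def euler (f : E3 → ℝ) (x : E3) : ℝ := ∑ j : Fin 3, x j * pd j f x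

theorem lap_eq_sum_pd (f : E3 → ℝ) (x : E3) : lap f x = ∑ i, pd i (pd i f) x := rfl

theorem fderiv_apply_eq_sum_pd (f : E3 → ℝ) (x v : E3) :
    fderiv ℝ f x v = ∑ j, v j * pd j f x := by
  have hv : v = ∑ j, v j • EuclideanSpace.single j (1 : ℝ) := by
    ext k
    fin_cases k <;> simp [Fin.sum_univ_three]
  conv_lhs => rw [hv]
  simp [pd]

theorem pd_congr_of_eventuallyEq {i : Fin 3} {f g : E3 → ℝ} {x : E3} (h : f =ᶠ[nhds x] g) :
    pd i f x = pd i g x := by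
  rw [pd, h.fderiv_eq, pd]

theorem pd_add {i : Fin 3} {f g : E3 → ℝ} {x : E3}
    (hf : DifferentiableAt ℝ f x) (hg : DifferentiableAt ℝ g x) :
    pd i (fun y => f y + g y) x = pd i f x + pd i g x := by
  simp [pd, fderiv_fun_add hf hg]

theorem pd_sub {i : Fin 3} {f g : E3 → ℝ} {x : E3}
    (hf : DifferentiableAt ℝ f x) (hg : DifferentiableAt ℝ g x) :
    pd i (fun y => f y - g y) x = pd i f x - pd i g x := by
  simp [pd, fderiv_fun_sub hf hg]

theorem pd_mul {i : Fin 3} {f g : E3 → ℝ} {x : E3}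
    (hf : DifferentiableAt ℝ f x) (hg : DifferentiableAt ℝ g x) :
    pd i (fun y => f y * g y) x = f x * pd i g x + pd i f x * g x := by
  simp [pd, fderiv_fun_mul hf hg]
  ring

theorem pd_const_mul {i : Fin 3} {f : E3 → ℝ} {x : E3} (c : ℝ) (hf : DifferentiableAt ℝ f x) :
    pd i (fun y => c * f y) x = c * pd i f x := by
  simp [pd, fderiv_const_mul hf]

theorem pd_pow {i : Fin 3} {f : E3 → ℝ} {x : E3} (n : ℕ) (hf : DifferentiableAt ℝ f x) :
    pd i (fun y => f y ^ n) x = n * f x ^ (n - 1) * pd i f x := by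
  simp [pd, fderiv_fun_pow n hf]

theorem pd_inv {i : Fin 3} {f : E3 → ℝ} {x : E3} (hf : DifferentiableAt ℝ f x) (hx : f x ≠ 0) :
    pd i (fun y => (f y)⁻¹) x = -pd i f x / f x ^ 2 := by
  have h := ((hasDerivAt_inv hx).comp_hasFDerivAt x hf.hasFDerivAt).fderiv
  have h' : (fun y => (f y)⁻¹) = Inv.inv ∘ f := rfl
  rw [pd, h', h]
  simp [pd]
  ring

theorem pd_coord (i j : Fin 3) (x : E3) :
    pd i (fun y => y j) x = if i = j then 1 else 0 := by
  have h : HasFDerivAt (fun y : E3 => y j) (EuclideanSpace.proj j : E3 →L[ℝ] ℝ) x :=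
    (EuclideanSpace.proj j : E3 →L[ℝ] ℝ).hasFDerivAt
  rw [pd, h.fderiv]
  simp [eq_comm]

theorem norm_sq_eq_coord (x : E3) : ‖x‖ ^ 2 = x 0 ^ 2 + x 1 ^ 2 + x 2 ^ 2 := by
  rw [EuclideanSpace.real_norm_sq_eq, Fin.sum_univ_three]

theorem differentiableAt_norm_sq (x : E3) : DifferentiableAt ℝ (fun y : E3 => ‖y‖ ^ 2) x :=
  (contDiff_norm_sq ℝ (n := 1)).differentiable one_ne_zero x

theorem differentiableAt_norm_of_ne {x : E3} (hx : x ≠ 0) :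
    DifferentiableAt ℝ (fun y : E3 => ‖y‖) x :=
  (contDiffAt_norm ℝ hx (n := 1)).differentiableAt one_ne_zero

theorem pd_norm_sq (i : Fin 3) (x : E3) : pd i (fun y => ‖y‖ ^ 2) x = 2 * x i := by
  have h := (hasStrictFDerivAt_norm_sq x).hasFDerivAt.fderiv
  rw [pd, h]
  simp [EuclideanSpace.inner_single_right]

theorem pd_norm (i : Fin 3) {x : E3} (hx : x ≠ 0) : pd i (fun y => ‖y‖) x = x i * ‖x‖⁻¹ := by
  have h := pd_pow (i := i) 2 (differentiableAt_norm_of_ne hx)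
  rw [pd_norm_sq] at h
  have : ‖x‖ ≠ 0 := norm_ne_zero_iff.2 hx
  field_simp
  push_cast at h
  simp only [pow_one] at h
  linarith

theorem inv_norm_sq_smul_eq_inversion (y : E3) : (‖y‖ ^ 2)⁻¹ • y = inversion 0 1 y := by
  simp [inversion]

theorem pd_comp_inversion (i : Fin 3) {g : E3 → ℝ} {y : E3} (hy : y ≠ 0)
    (hg : DifferentiableAt ℝ g (inversion 0 1 y)) :
    pd i (fun z => g (inversion 0 1 z)) y =
      (‖y‖ ^ 2)⁻¹ *
        (pd i g (inversion 0 1 y) - 2 * y i * euler g (inversion 0 1 y)) := by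
  have h := (hg.hasFDerivAt.comp y (hasFDerivAt_inversion (R := 1) hy)).fderiv
  have h' : (fun z => g (inversion 0 1 z)) = g ∘ inversion 0 1 := rfl
  rw [pd, h', h]
  simp only [sub_zero, ContinuousLinearMap.comp_apply, smul_apply, map_smul,
    dist_zero_right]
  rw [euler, ← fderiv_apply_eq_sum_pd]
  simp [Submodule.reflection_orthogonal_apply, Submodule.reflection_singleton_apply,
    EuclideanSpace.inner_single_right, inversion, pd]
  ring_nf
  simp

theorem ContDiff.pd {n m : ℕ∞ω} {f : E3 → ℝ} (hf : ContDiff ℝ n f) (h : m + 1 ≤ n) (i : Fin 3) :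
    ContDiff ℝ m (pd i f) :=
  (hf.fderiv_right h).clm_apply contDiff_const

theorem pd_comm (i j : Fin 3) {f : E3 → ℝ} (hf : ContDiff ℝ 2 f) (x : E3) :
    pd i (pd j f) x = pd j (pd i f) x := by
  have hd : DifferentiableAt ℝ (fderiv ℝ f) x :=
    (hf.fderiv_right (m := 1) (by norm_num)).differentiable one_ne_zero x
  have key (i j : Fin 3) : pd i (pd j f) x =
      fderiv ℝ (fderiv ℝ f) x (EuclideanSpace.single i 1) (EuclideanSpace.single j 1) := by
    have : pd j f = fun y => fderiv ℝ f y (EuclideanSpace.single j 1) := rfl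
    rw [this, pd, fderiv_clm_apply hd (by fun_prop)]
    simp
  rw [key, key]
  exact (hf.contDiffAt.isSymmSndFDerivAt (by simp)).eq _ _

theorem tsupport_pd_subset (i : Fin 3) (f : E3 → ℝ) : tsupport (pd i f) ⊆ tsupport f :=
  tsupport_fderiv_apply_subset ℝ _

theorem integrable_pd {f : E3 → ℝ} (hf : ContDiff ℝ 1 f) (hc : HasCompactSupport f) (i : Fin 3) :
    Integrable (pd i f) :=
  ((hf.pd (m := 0) (by simp) i).continuous).integrable_of_hasCompactSupport
    (hc.fderiv_apply ℝ _)

theorem integral_pd_eq_zero {f : E3 → ℝ} (hf : ContDiff ℝ 1 f) (hc : HasCompactSupport f)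
    (i : Fin 3) : ∫ x, pd i f x = 0 := by
  have h := integral_mul_fderiv_eq_neg_fderiv_mul_of_integrable (μ := (volume : Measure E3))
    (f := fun _ : E3 => (1 : ℝ)) (g := f) (v := EuclideanSpace.single i 1)
    (by simp) ((integrable_pd hf hc i).congr (.of_forall fun x => by simp [pd]))
    (by simpa using hf.continuous.integrable_of_hasCompactSupport hc)
    (fun x _ => by fun_prop) (fun x _ => hf.differentiable one_ne_zero x)
  simpa [pd] using h

theorem integral_inversion (g : E3 → ℝ) :
    ∫ x, g x = ∫ y, (‖y‖ ^ 6)⁻¹ * g (inversion 0 1 y) := by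
  have himg : inversion (0 : E3) 1 '' {0}ᶜ = {0}ᶜ := by
    rw [Set.image_compl_eq (inversion_bijective 0 one_ne_zero)]
    simp
  have hdet (y : E3) :
      |(((1 / dist y 0) ^ 2 • ((ℝ ∙ (y - 0))ᗮ.reflection : E3 →L[ℝ] E3)).det)|
        = (‖y‖ ^ 6)⁻¹ := by
    have h1 : ((ℝ ∙ (y - 0))ᗮ.reflection : E3 →L[ℝ] E3).det =
        (-1) ^ Module.finrank ℝ (ℝ ∙ (y - 0))ᗮᗮ :=
      Submodule.det_reflection _
    rw [ContinuousLinearMap.det, ContinuousLinearMap.toLinearMap_smul, LinearMap.det_smul]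
    rw [ContinuousLinearMap.det] at h1
    rw [h1, abs_mul]
    simp [← pow_mul]
  have h := integral_image_eq_integral_abs_det_fderiv_smul (volume : Measure E3)
    (measurableSet_singleton (0 : E3)).compl
    (fun y hy => (hasFDerivAt_inversion (c := (0 : E3)) (R := 1) hy).hasFDerivWithinAt)
    (inversion_injective (0 : E3) one_ne_zero).injOn g
  have hae : ({0}ᶜ : Set E3) =ᵐ[volume] Set.univ := by
    simp [ae_eq_univ]
  rw [himg, setIntegral_congr_set hae, setIntegral_univ] at h
  rw [h, ← setIntegral_univ (μ := volume) (f := fun y => (‖y‖ ^ 6)⁻¹ * _),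
    ← setIntegral_congr_set hae]
  refine setIntegral_congr_fun (measurableSet_singleton (0 : E3)).compl fun y hy => ?_
  simp only [smul_eq_mul]
  rw [hdet y]

theorem ContDiff.euler {n m : ℕ∞ω} {f : E3 → ℝ} (hf : ContDiff ℝ n f) (h : m + 1 ≤ n) :
    ContDiff ℝ m (euler f) := by
  unfold _root_.euler
  exact ContDiff.sum fun j _ => (by fun_prop : ContDiff ℝ m fun x : E3 => x j).mul (hf.pd h j)

theorem pd_euler (i : Fin 3) {f : E3 → ℝ} (hf : ContDiff ℝ 2 f) (x : E3) :
    pd i (euler f) x = pd i f x + ∑ j, x j * pd i (pd j f) x := by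
  have hd (j : Fin 3) : DifferentiableAt ℝ (pd j f) x :=
    (hf.pd (m := 1) (by norm_num) j).differentiable one_ne_zero x
  have hc (j : Fin 3) : DifferentiableAt ℝ (fun y : E3 => y j) x := by fun_prop
  have hm (j : Fin 3) := (hc j).fun_mul (hd j)
  have he : euler f = fun y => y 0 * pd 0 f y + y 1 * pd 1 f y + y 2 * pd 2 f y := by
    funext y
    rw [euler, Fin.sum_univ_three]
  rw [he, pd_add ((hm 0).fun_add (hm 1)) (hm 2), pd_add (hm 0) (hm 1), pd_mul (hc 0) (hd 0),
    pd_mul (hc 1) (hd 1), pd_mul (hc 2) (hd 2)]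
  simp only [pd_coord, Fin.sum_univ_three]
  fin_cases i <;> simp <;> ring

theorem inversion_apply_coord (y : E3) (j : Fin 3) :
    inversion (0 : E3) 1 y j = (‖y‖ ^ 2)⁻¹ * y j := by
  rw [← inv_norm_sq_smul_eq_inversion]
  simp

theorem differentiableAt_comp_inversion {g : E3 → ℝ} {y : E3} (hy : y ≠ 0)
    (hg : Differentiable ℝ g) : DifferentiableAt ℝ (fun z => g (inversion 0 1 z)) y :=
  (hg _).comp y (hasFDerivAt_inversion (R := 1) hy).differentiableAt

theorem pd_kelvin (i : Fin 3) {u : E3 → ℝ} (hu : Differentiable ℝ u) {y : E3} (hy : y ≠ 0) :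
    pd i (kelvin u) y =
      ‖y‖⁻¹ * (y i * (u (inversion 0 1 y) - 2 * euler u (inversion 0 1 y)) +
        pd i u (inversion 0 1 y)) := by
  have hk : kelvin u = fun z => ‖z‖ * u (inversion 0 1 z) := by
    funext z
    rw [kelvin, inv_norm_sq_smul_eq_inversion]
  rw [hk, pd_mul (differentiableAt_norm_of_ne hy) (differentiableAt_comp_inversion hy hu),
    pd_comp_inversion i hy (hu _), pd_norm i hy]
  have : ‖y‖ ≠ 0 := norm_ne_zero_iff.2 hy
  field_simp
  ring

theorem pd_pd_kelvin (i : Fin 3) {u : E3 → ℝ} (hu : ContDiff ℝ 2 u) {y : E3} (hy : y ≠ 0) :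
    pd i (pd i (kelvin u)) y =
      -(y i * (‖y‖⁻¹) ^ 3) * (y i * (u (inversion 0 1 y) - 2 * euler u (inversion 0 1 y)) +
        pd i u (inversion 0 1 y)) +
      ‖y‖⁻¹ * (u (inversion 0 1 y) - 2 * euler u (inversion 0 1 y) +
        y i * ((‖y‖ ^ 2)⁻¹ * (pd i (fun x => u x - 2 * euler u x) (inversion 0 1 y) -
          2 * y i * euler (fun x => u x - 2 * euler u x) (inversion 0 1 y))) +
        (‖y‖ ^ 2)⁻¹ * (pd i (pd i u) (inversion 0 1 y) -
          2 * y i * euler (pd i u) (inversion 0 1 y))) := by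
  have hev : pd i (kelvin u) =ᶠ[nhds y] fun z =>
      ‖z‖⁻¹ * (z i * (u (inversion 0 1 z) - 2 * euler u (inversion 0 1 z)) +
        pd i u (inversion 0 1 z)) := by
    filter_upwards [isOpen_ne.mem_nhds hy] with z hz
    exact pd_kelvin i (hu.differentiable two_ne_zero) hz
  have hA : Differentiable ℝ (fun x => u x - 2 * euler u x) :=
    (hu.differentiable two_ne_zero).sub
      (((hu.euler (m := 1) (by norm_num)).differentiable one_ne_zero).const_mul 2)
  have hg : Differentiable ℝ (pd i u) :=
    (hu.pd (m := 1) (by norm_num) i).differentiable one_ne_zero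
  have hc : DifferentiableAt ℝ (fun z : E3 => z i) y := by fun_prop
  have hAy := differentiableAt_comp_inversion hy hA
  have hgy := differentiableAt_comp_inversion hy hg
  have hn := differentiableAt_norm_of_ne hy
  have hn0 : ‖y‖ ≠ 0 := norm_ne_zero_iff.2 hy
  rw [pd_congr_of_eventuallyEq hev, pd_mul (hn.fun_inv hn0) ((hc.fun_mul hAy).fun_add hgy),
    pd_add (hc.fun_mul hAy) hgy, pd_mul hc hAy, pd_inv hn hn0, pd_norm i hy, pd_coord,
    pd_comp_inversion i hy (hA _), pd_comp_inversion i hy (hg _)]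
  simp only [if_true]
  field_simp
  ring

theorem lap_kelvin {u : E3 → ℝ} (hu : ContDiff ℝ 2 u) {y : E3} (hy : y ≠ 0) :
    lap (kelvin u) y = ‖y‖⁻¹ * (2 * u (inversion 0 1 y) - 4 * euler u (inversion 0 1 y) +
      (‖y‖ ^ 2)⁻¹ * lap u (inversion 0 1 y)) := by
  have hn0 : ‖y‖ ≠ 0 := norm_ne_zero_iff.2 hy
  have hE : Differentiable ℝ (euler u) :=
    (hu.euler (m := 1) (by norm_num)).differentiable one_ne_zero
  have hpA (i : Fin 3) (x : E3) :
      pd i (fun x => u x - 2 * euler u x) x =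
        -pd i u x - 2 * ∑ j, x j * pd i (pd j u) x := by
    rw [pd_sub (hu.differentiable two_ne_zero x) ((hE x).const_mul 2), pd_const_mul 2 (hE x),
      pd_euler i hu]
    ring
  have hEA (x : E3) : euler (fun x => u x - 2 * euler u x) x =
      ∑ i, x i * (-pd i u x - 2 * ∑ j, x j * pd i (pd j u) x) :=
    Finset.sum_congr rfl fun i _ => by rw [hpA]
  have hsq := norm_sq_eq_coord y
  simp only [lap_eq_sum_pd, pd_pd_kelvin _ hu hy]
  simp only [hEA, hpA]
  simp only [euler, Fin.sum_univ_three, inversion_apply_coord]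
  generalize inversion 0 1 y = x
  generalize ‖y‖ = s at *
  have e0 : y 0 ^ 2 = s ^ 2 - y 1 ^ 2 - y 2 ^ 2 := by linarith
  field_simp
  ring_nf
  simp only [show y 0 ^ 4 = (y 0 ^ 2) ^ 2 by ring, show y 0 ^ 3 = y 0 ^ 2 * y 0 by ring, e0]
  ring

/-- A vector field whose divergence is a quarter of `|x|⁻⁴(2u - 4 x·∇u + |x|²Δu)² - (Δu)²`. -/
def defectField (u : E3 → ℝ) (i : Fin 3) (x : E3) : ℝ :=
  (‖x‖ ^ 2)⁻¹ * ((u x - 2 * euler u x) * pd i u x +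
    x i * (pd 0 u x ^ 2 + pd 1 u x ^ 2 + pd 2 u x ^ 2)) -
  ((‖x‖ ^ 2)⁻¹) ^ 2 * (x i * u x ^ 2)

theorem defectField_eq_zero_of_notMem_tsupport {u : E3 → ℝ} (i : Fin 3) {x : E3}
    (hx : x ∉ tsupport u) : defectField u i x = 0 := by
  have hp (j : Fin 3) : pd j u x = 0 :=
    image_eq_zero_of_notMem_tsupport fun h => hx (tsupport_pd_subset j u h)
  simp [defectField, hp, image_eq_zero_of_notMem_tsupport hx]

theorem hasCompactSupport_defectField {u : E3 → ℝ} (hu : HasCompactSupport u) (i : Fin 3) :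
    HasCompactSupport (defectField u i) :=
  HasCompactSupport.intro hu fun _ => defectField_eq_zero_of_notMem_tsupport i

theorem contDiff_defectField {u : E3 → ℝ} (hu : ContDiff ℝ 2 u)
    (h0 : tsupport u ⊆ {x : E3 | x ≠ 0}) (i : Fin 3) : ContDiff ℝ 1 (defectField u i) := by
  refine contDiff_iff_contDiffAt.2 fun x => ?_
  by_cases hx : x ∈ tsupport u
  · have hr : ContDiffAt ℝ 1 (fun x : E3 => (‖x‖ ^ 2)⁻¹) x :=
      (contDiff_norm_sq ℝ).contDiffAt.inv (by simpa using h0 hx)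
    have hu1 : ContDiff ℝ 1 u := hu.of_le (by norm_num)
    have hp (j : Fin 3) : ContDiff ℝ 1 (pd j u) := hu.pd (by norm_num) j
    have hE : ContDiff ℝ 1 (euler u) := hu.euler (by norm_num)
    have hc : ContDiff ℝ 1 fun x : E3 => x i := by fun_prop
    exact (hr.mul (((hu1.sub (contDiff_const.mul hE)).mul (hp i)).add
      (hc.mul ((((hp 0).pow 2).add ((hp 1).pow 2)).add ((hp 2).pow 2)))).contDiffAt).sub
      ((hr.pow 2).mul (hc.mul (hu1.pow 2)).contDiffAt)
  · have : defectField u i =ᶠ[nhds x] fun _ => 0 := by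
      filter_upwards [(isClosed_tsupport u).isOpen_compl.mem_nhds hx] with z hz
      exact defectField_eq_zero_of_notMem_tsupport i hz
    exact contDiffAt_const.congr_of_eventuallyEq this

theorem pd_defectField {u : E3 → ℝ} (hu : ContDiff ℝ 2 u) (i : Fin 3) {x : E3} (hx : x ≠ 0) :
    pd i (defectField u i) x =
      (‖x‖ ^ 2)⁻¹ * ((u x - 2 * euler u x) * pd i (pd i u) x +
        (pd i u x - 2 * (pd i u x + ∑ j, x j * pd i (pd j u) x)) * pd i u x +
        x i * (2 * pd 0 u x * pd i (pd 0 u) x + 2 * pd 1 u x * pd i (pd 1 u) x +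
          2 * pd 2 u x * pd i (pd 2 u) x) +
        (pd 0 u x ^ 2 + pd 1 u x ^ 2 + pd 2 u x ^ 2)) -
      2 * x i * ((‖x‖ ^ 2)⁻¹) ^ 2 * ((u x - 2 * euler u x) * pd i u x +
        x i * (pd 0 u x ^ 2 + pd 1 u x ^ 2 + pd 2 u x ^ 2)) -
      ((‖x‖ ^ 2)⁻¹) ^ 2 * (2 * x i * u x * pd i u x + u x ^ 2) +
      4 * x i * ((‖x‖ ^ 2)⁻¹) ^ 3 * (x i * u x ^ 2) := by
  have hn0 : ‖x‖ ≠ 0 := norm_ne_zero_iff.2 hx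
  have hn2 : ‖x‖ ^ 2 ≠ 0 := pow_ne_zero 2 hn0
  have hd : DifferentiableAt ℝ u x := hu.differentiable two_ne_zero x
  have hp (j : Fin 3) : DifferentiableAt ℝ (pd j u) x :=
    (hu.pd (m := 1) (by norm_num) j).differentiable one_ne_zero x
  have hE : DifferentiableAt ℝ (euler u) x :=
    (hu.euler (m := 1) (by norm_num)).differentiable one_ne_zero x
  have hc : DifferentiableAt ℝ (fun z : E3 => z i) x := by fun_prop
  have hr := (differentiableAt_norm_sq x).fun_inv hn2
  have hA := hd.fun_sub (hE.const_mul 2)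
  have hs01 := ((hp 0).fun_pow 2).fun_add ((hp 1).fun_pow 2)
  have hs := hs01.fun_add ((hp 2).fun_pow 2)
  have hP := (hA.fun_mul (hp i)).fun_add (hc.fun_mul hs)
  have hQ := hc.fun_mul (hd.fun_pow 2)
  have hF : defectField u i = fun x => (‖x‖ ^ 2)⁻¹ * ((u x - 2 * euler u x) * pd i u x +
    x i * (pd 0 u x ^ 2 + pd 1 u x ^ 2 + pd 2 u x ^ 2)) -
    ((‖x‖ ^ 2)⁻¹) ^ 2 * (x i * u x ^ 2) := rfl
  rw [hF, pd_sub (hr.fun_mul hP) ((hr.fun_pow 2).fun_mul hQ), pd_mul hr hP,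
    pd_mul (hr.fun_pow 2) hQ, pd_pow 2 hr, pd_inv (differentiableAt_norm_sq x) hn2, pd_norm_sq,
    pd_add (hA.fun_mul (hp i)) (hc.fun_mul hs), pd_mul hA (hp i), pd_mul hc hs,
    pd_sub hd (hE.const_mul 2), pd_const_mul 2 hE, pd_euler i hu,
    pd_add hs01 ((hp 2).fun_pow 2), pd_add ((hp 0).fun_pow 2) ((hp 1).fun_pow 2),
    pd_pow 2 (hp 0), pd_pow 2 (hp 1), pd_pow 2 (hp 2), pd_mul hc (hd.fun_pow 2), pd_pow 2 hd,
    pd_coord]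
  simp only [if_true]
  push_cast
  field_simp
  ring

theorem sum_pd_defectField {u : E3 → ℝ} (hu : ContDiff ℝ 2 u) {x : E3} (hx : x ≠ 0) :
    ((‖x‖ ^ 2)⁻¹) ^ 2 * (2 * u x - 4 * euler u x + ‖x‖ ^ 2 * lap u x) ^ 2 =
      lap u x ^ 2 + 4 * ∑ i, pd i (defectField u i) x := by
  have hn0 : ‖x‖ ≠ 0 := norm_ne_zero_iff.2 hx
  have hsq := norm_sq_eq_coord x
  simp only [lap_eq_sum_pd, pd_defectField hu _ hx]
  simp only [euler, Fin.sum_univ_three, pd_comm 1 0 hu x, pd_comm 2 0 hu x, pd_comm 2 1 hu x]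
  generalize ‖x‖ = s at *
  have e0 : x 0 ^ 2 = s ^ 2 - x 1 ^ 2 - x 2 ^ 2 := by linarith
  field_simp
  ring_nf
  simp only [e0]
  ring

theorem lap_kelvin_sq_inversion {u : E3 → ℝ} (hu : ContDiff ℝ 2 u) {x : E3} (hx : x ≠ 0) :
    (‖x‖ ^ 6)⁻¹ * lap (kelvin u) (inversion 0 1 x) ^ 2 =
      ((‖x‖ ^ 2)⁻¹) ^ 2 * (2 * u x - 4 * euler u x + ‖x‖ ^ 2 * lap u x) ^ 2 := by
  have hn0 : ‖x‖ ≠ 0 := norm_ne_zero_iff.2 hx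
  have hinv : inversion (0 : E3) 1 x ≠ 0 := by
    rwa [Ne, inversion_eq_center one_ne_zero]
  have hnorm : ‖inversion (0 : E3) 1 x‖ = ‖x‖⁻¹ := by
    simpa using dist_inversion_center (0 : E3) x 1
  rw [lap_kelvin hu hinv, inversion_inversion 0 one_ne_zero, hnorm]
  field_simp

/-- The Kelvin transform is an `L²`-isometry for the Laplacian:
`∫ |ΔU|² dy = ∫ |Δu|² dx`. -/
theorem kelvin_laplacian_isometry (u : E3 → ℝ) (hu : ContDiff ℝ (⊤ : ℕ∞) u)
    (hsupp : HasCompactSupport u) (h0 : tsupport u ⊆ {x : E3 | x ≠ 0}) :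
    (∫ y : E3, (lap (kelvin u) y) ^ 2) = ∫ x : E3, (lap u x) ^ 2 := by
  have hu2 : ContDiff ℝ 2 u := contDiff_infty.1 hu 2
  have hF (i : Fin 3) := contDiff_defectField hu2 h0 i
  have hFc (i : Fin 3) := hasCompactSupport_defectField hsupp i
  have hlap : Integrable (fun x => lap u x ^ 2) := by
    refine Continuous.integrable_of_hasCompactSupport ?_ ?_
    · refine Continuous.pow (continuous_finsetSum _ fun i _ => ?_) 2
      exact ((hu2.pd (m := 1) (by norm_num) i).pd (m := 0) (by simp) i).continuous
    · refine HasCompactSupport.intro hsupp fun x hx => ?_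
      have hp (i : Fin 3) : pd i (pd i u) x = 0 :=
        image_eq_zero_of_notMem_tsupport fun h =>
          hx (tsupport_pd_subset i u (tsupport_pd_subset i _ h))
      simp [lap_eq_sum_pd, hp]
  have hae : (fun x : E3 => (‖x‖ ^ 6)⁻¹ * lap (kelvin u) (inversion 0 1 x) ^ 2) =ᵐ[volume]
      fun x => lap u x ^ 2 + 4 * ∑ i, pd i (defectField u i) x := by
    filter_upwards [Measure.ae_ne volume (0 : E3)] with x hx
    rw [lap_kelvin_sq_inversion hu2 hx, sum_pd_defectField hu2 hx]
  rw [integral_inversion, integral_congr_ae hae,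
    integral_add hlap
      ((integrable_finsetSum _ fun i _ => integrable_pd (hF i) (hFc i) i).const_mul 4),
    integral_const_mul, integral_finsetSum _ fun i _ => integrable_pd (hF i) (hFc i) i]
  simp [integral_pd_eq_zero (hF _) (hFc _)]

end
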